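/- Let ν ≥ −1/2. Then for all x > 0, x · K_{ν+2}(x) · I_ν(x) < 1 + (2ν+3)/x. -/

import Mathlib

open Real MeasureTheory

/-- Modified Bessel function of the first kind, `I_ν(x) = ∑_{k} (x/2)^{ν+2k} / (Γ(ν+k+1) k!)`. -/
noncomputable def besselI (ν x : ℝ) : ℝ :=
  ∑' k : ℕ, (x / 2) ^ (ν + 2 * (k : ℝ)) / (Real.Gamma (ν + (k : ℝ) + 1) * (Nat.factorial k : ℝ))

/-- Modified Bessel function of the second kind, `K_ν(x) = ∫_0^∞ e^{-x cosh t} cosh(ν t) dt`. -/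
noncomputable def besselK (ν x : ℝ) : ℝ :=
  ∫ t in Set.Ioi (0 : ℝ), Real.exp (-x * Real.cosh t) * Real.cosh (ν * t)

/-- Lower incomplete gamma function `γ(a, x) = ∫_0^x t^{a-1} e^{-t} dt`. -/
noncomputable def lowerIncGamma (a x : ℝ) : ℝ :=
  ∫ t in (0 : ℝ)..x, t ^ (a - 1) * Real.exp (-t)

/-!
The functions `x (I_ν K_{ν+1} + I_{ν+1} K_ν)` are constant in `x` by the differential recurrences,
and 1-periodic in `ν` by the three-term recurrences; letting `x → 0` for some positive order shows
that they are all equal to `1`. When `I_{ν+1} > 0` this gives `x K_{ν+1} I_ν < 1`, and also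
`x K_ν I_ν < 1` when moreover `K_ν ≤ K_{ν+1}`, i.e. `ν ≥ -1/2`. The recurrence
`I_ν = I_{ν+2} + (2ν+2)/x I_{ν+1}` then splits `x K_{ν+2} I_ν` into
`x K_{ν+2} I_{ν+2} + (2ν+2)/x (x K_{ν+2} I_{ν+1})`, where both products are less than `1`.
-/

open Filter Set
open scoped Nat Topology

section BesselClifford

theorem inv_Gamma_eq_mul_inv_Gamma_add_one (s : ℝ) : (Gamma s)⁻¹ = s * (Gamma (s + 1))⁻¹ := by
  rcases eq_or_ne s 0 with rfl | hs
  · simp only [Gamma_zero, inv_zero, zero_mul]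
  · rw [Gamma_add_one hs, mul_inv, mul_inv_cancel_left₀ hs]

/-- The Bessel–Clifford function `C_ν(y) = ∑_k y^k / (Γ(ν+k+1) k!)`, the entire factor of the Bessel
function `I_ν(x) = (x/2)^ν C_ν(x²/4)`. As Mathlib's `Gamma` is `0` at its poles, `(Gamma s)⁻¹` is
the entire reciprocal Gamma function and every real order `ν` is allowed. -/
noncomputable def besselClifford (ν y : ℝ) : ℝ :=
  ∑' k : ℕ, (Gamma (ν + k + 1))⁻¹ * (y ^ k / k !)

variable (ν : ℝ) {y : ℝ}

theorem summable_besselClifford (y : ℝ) :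
    Summable fun k : ℕ ↦ (Gamma (ν + k + 1))⁻¹ * (y ^ k / k !) := by
  obtain ⟨N, hN⟩ := exists_nat_gt (-ν)
  have hc : ∀ k ≥ N, (Gamma (ν + k + 1))⁻¹ ≤ (Gamma (ν + N + 1))⁻¹ := by
    intro k hk
    induction k, hk using Nat.le_induction with
    | base => rfl
    | succ k hk ih =>
      have hk' : (N : ℝ) ≤ k := by exact_mod_cast hk
      refine le_trans ?_ ih
      rw [inv_Gamma_eq_mul_inv_Gamma_add_one (ν + k + 1), Nat.cast_add_one, ← add_assoc ν]
      have hΓ := (Gamma_pos_of_pos (show 0 < ν + k + 1 + 1 by linarith)).le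
      exact le_mul_of_one_le_left (inv_nonneg.2 hΓ) (by linarith)
  refine .of_norm_bounded_eventually_nat
    ((summable_pow_div_factorial |y|).mul_left (Gamma (ν + N + 1))⁻¹) ?_
  filter_upwards [eventually_ge_atTop N] with k hk
  have hk' : (N : ℝ) ≤ k := by exact_mod_cast hk
  have hΓ := (Gamma_pos_of_pos (show 0 < ν + k + 1 by linarith)).le
  rw [norm_mul, norm_div, norm_pow, norm_of_nonneg (inv_nonneg.2 hΓ), norm_natCast, norm_eq_abs]
  exact mul_le_mul_of_nonneg_right (hc k hk) (by positivity)

theorem besselClifford_zero_right : besselClifford ν 0 = (Gamma (ν + 1))⁻¹ := by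
  rw [besselClifford, tsum_eq_single 0 fun k hk ↦ by simp [hk]]
  simp

variable {ν} in
theorem besselClifford_pos (hν : -1 < ν) (hy : 0 ≤ y) : 0 < besselClifford ν y := by
  have hΓ (k : ℕ) : 0 < (Gamma (ν + k + 1))⁻¹ :=
    inv_pos.2 <| Gamma_pos_of_pos <| by linarith [k.cast_nonneg (α := ℝ)]
  refine (summable_besselClifford ν y).tsum_pos (fun k ↦ ?_) 0 ?_
  · have := hΓ k
    positivity
  · simpa using hΓ 0

theorem hasDerivAt_besselClifford (y : ℝ) :
    HasDerivAt (besselClifford ν) (besselClifford (ν + 1) y) y := by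
  have hshift (k : ℕ) : ν + (k + 1 : ℕ) + 1 = ν + 1 + k + 1 := by push_cast; ring
  have hsum (z : ℝ) : besselClifford ν z = (Gamma (ν + 1))⁻¹ +
      ∑' k : ℕ, (Gamma (ν + 1 + k + 1))⁻¹ * (z ^ (k + 1) / (k + 1)!) := by
    rw [besselClifford, (summable_besselClifford ν z).tsum_eq_zero_add]
    simp only [hshift, Nat.cast_zero, add_zero, pow_zero, Nat.factorial_zero, Nat.cast_one,
      div_one, mul_one]
  have hpow (k : ℕ) (z : ℝ) : HasDerivAt (fun z : ℝ ↦ z ^ (k + 1) / (k + 1)!) (z ^ k / k !) z := by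
    refine ((hasDerivAt_pow (k + 1) z).div_const _).congr_deriv ?_
    rw [Nat.factorial_succ]
    push_cast
    field_simp
  rw [funext hsum]
  refine HasDerivAt.const_add _ ?_
  refine hasDerivAt_tsum_of_isPreconnected (t := Metric.ball 0 (|y| + 1)) (y₀ := y)
    (summable_besselClifford (ν + 1) (|y| + 1)).norm Metric.isOpen_ball
    (convex_ball (0 : ℝ) _).isPreconnected (fun k z _ ↦ (hpow k z).const_mul _) (fun k z hz ↦ ?_)
    (by simp) ?_ (by simp)
  · have hz' : |z| ≤ |(|y| + 1)| := (mem_ball_zero_iff.1 hz).le.trans (le_abs_self _)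
    simp only [norm_mul, norm_div, norm_pow, norm_eq_abs]
    gcongr
  · simpa only [hshift] using (summable_nat_add_iff 1).2 (summable_besselClifford ν y)

theorem besselClifford_sub_one (y : ℝ) :
    besselClifford (ν - 1) y = ν * besselClifford ν y + y * besselClifford (ν + 1) y := by
  have hterm (k : ℕ) : (Gamma (ν - 1 + k + 1))⁻¹ * (y ^ k / k !) =
      ν * ((Gamma (ν + k + 1))⁻¹ * (y ^ k / k !)) +
        k * ((Gamma (ν + k + 1))⁻¹ * (y ^ k / k !)) := by
    rw [show ν - 1 + k + 1 = ν + k by ring, inv_Gamma_eq_mul_inv_Gamma_add_one]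
    ring
  have hshift : HasSum (fun k : ℕ ↦ k * ((Gamma (ν + k + 1))⁻¹ * (y ^ k / k !)))
      (y * besselClifford (ν + 1) y) := by
    rw [← hasSum_nat_add_iff' 1]
    simp only [Finset.range_one, Finset.sum_singleton, Nat.cast_zero, zero_mul, sub_zero]
    refine ((summable_besselClifford (ν + 1) y).hasSum.mul_left y).congr_fun fun k ↦ ?_
    rw [Nat.factorial_succ, show ν + (k + 1 : ℕ) + 1 = ν + 1 + k + 1 by push_cast; ring]
    push_cast
    field_simp
    ring
  rw [besselClifford, tsum_congr hterm]
  exact (((summable_besselClifford ν y).hasSum.mul_left ν).add hshift).tsum_eq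

end BesselClifford

section BesselI

variable (ν : ℝ) {x : ℝ}

theorem besselI_eq_rpow_mul_besselClifford (hx : 0 < x) :
    besselI ν x = (x / 2) ^ ν * besselClifford ν (x ^ 2 / 4) := by
  rw [besselI, besselClifford, ← tsum_mul_left]
  refine tsum_congr fun k ↦ ?_
  have hpow : (x / 2) ^ (2 * (k : ℝ)) = (x ^ 2 / 4) ^ k := by
    rw [rpow_mul (by positivity), rpow_natCast, rpow_two]
    ring
  rw [rpow_add (by positivity), hpow, div_eq_mul_inv, mul_inv]
  ring

variable {ν} in
theorem besselI_pos (hν : -1 < ν) (hx : 0 < x) : 0 < besselI ν x := by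
  rw [besselI_eq_rpow_mul_besselClifford ν hx]
  exact mul_pos (by positivity) (besselClifford_pos hν (by positivity))

theorem besselI_add_one (hx : 0 < x) :
    besselI (ν + 1) x = besselI (ν - 1) x - 2 * ν / x * besselI ν x := by
  have hx2 : x / 2 ≠ 0 := by positivity
  simp only [besselI_eq_rpow_mul_besselClifford _ hx]
  rw [besselClifford_sub_one, rpow_add_one hx2, rpow_sub_one hx2]
  field_simp
  ring

theorem hasDerivAt_besselI (hx : 0 < x) :
    HasDerivAt (besselI ν) (besselI (ν + 1) x + ν / x * besselI ν x) x := by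
  have hx2 : 0 < x / 2 := by positivity
  have hpow : HasDerivAt (fun z : ℝ ↦ (z / 2) ^ ν) (ν / x * (x / 2) ^ ν) x := by
    refine (((hasDerivAt_id x).div_const 2).rpow_const (p := ν) (.inl hx2.ne')).congr_deriv ?_
    rw [id, rpow_sub_one hx2.ne']
    field_simp
  have hsq : HasDerivAt (fun z : ℝ ↦ z ^ 2 / 4) (x / 2) x :=
    ((hasDerivAt_pow 2 x).div_const 4).congr_deriv (by ring)
  have h := (hpow.mul ((hasDerivAt_besselClifford ν _).comp x hsq)).congr_of_eventuallyEq
    (eventually_of_mem (Ioi_mem_nhds hx) fun z hz ↦ besselI_eq_rpow_mul_besselClifford ν hz)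
  refine h.congr_deriv ?_
  rw [besselI_eq_rpow_mul_besselClifford ν hx, besselI_eq_rpow_mul_besselClifford _ hx,
    rpow_add_one hx2.ne', Function.comp_apply]
  ring

theorem tendsto_rpow_neg_mul_besselI :
    Tendsto (fun x ↦ (x / 2) ^ (-ν) * besselI ν x) (𝓝[>] 0) (𝓝 (Gamma (ν + 1))⁻¹) := by
  have hcont : Continuous fun x : ℝ ↦ besselClifford ν (x ^ 2 / 4) :=
    (continuous_iff_continuousAt.2 fun y ↦ (hasDerivAt_besselClifford ν y).continuousAt).comp
      (by fun_prop)
  have hlim := (hcont.tendsto 0).mono_left (nhdsWithin_le_nhds (s := Ioi 0))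
  norm_num only [besselClifford_zero_right] at hlim
  refine hlim.congr' (eventually_mem_nhdsWithin.mono fun x (hx : 0 < x) ↦ ?_)
  simp only [besselI_eq_rpow_mul_besselClifford ν hx]
  rw [← mul_assoc, ← rpow_add (by positivity), neg_add_cancel, rpow_zero, one_mul]

end BesselI

section ExpSubstitution

variable {E : Type*} [NormedAddCommGroup E] [NormedSpace ℝ E] (g : ℝ → E)

theorem integral_exp_smul_comp_exp : ∫ t, rexp t • g (rexp t) = ∫ u in Ioi 0, g u := by
  rw [← range_exp, ← image_univ, integral_image_eq_integral_abs_deriv_smul .univ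
    (fun t _ ↦ (hasDerivAt_exp t).hasDerivWithinAt) exp_injective.injOn]
  simp only [abs_exp, setIntegral_univ]

theorem integrable_exp_smul_comp_exp_iff :
    Integrable (fun t ↦ rexp t • g (rexp t)) ↔ IntegrableOn g (Ioi 0) := by
  rw [← range_exp, ← image_univ, integrableOn_image_iff_integrableOn_abs_deriv_smul .univ
    (fun t _ ↦ (hasDerivAt_exp t).hasDerivWithinAt) exp_injective.injOn]
  simp only [abs_exp, integrableOn_univ]

variable {μ : ℝ}

theorem exp_smul_Gamma_integrand_comp_exp (t : ℝ) :
    rexp t • (rexp (-rexp t) * rexp t ^ (μ - 1)) = rexp (-rexp t + μ * t) := by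
  rw [smul_eq_mul, ← exp_mul, ← exp_add, ← exp_add]
  ring_nf

theorem integrable_exp_neg_exp_add_mul (hμ : 0 < μ) :
    Integrable fun t ↦ rexp (-rexp t + μ * t) := by
  simpa only [exp_smul_Gamma_integrand_comp_exp] using
    (integrable_exp_smul_comp_exp_iff _).2 (GammaIntegral_convergent hμ)

theorem integral_exp_neg_exp_add_mul (hμ : 0 < μ) :
    ∫ t, rexp (-rexp t + μ * t) = Gamma μ := by
  rw [Gamma_eq_integral hμ, ← integral_exp_smul_comp_exp]
  simp only [exp_smul_Gamma_integrand_comp_exp]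

end ExpSubstitution

section BesselK

variable (ν : ℝ) {x : ℝ}

theorem sq_div_four_le_cosh (t : ℝ) : t ^ 2 / 4 ≤ cosh t := by
  rw [← cosh_abs, ← sq_abs, cosh_eq]
  have := quadratic_le_exp_of_nonneg (abs_nonneg t)
  have := exp_pos (-|t|)
  linarith [abs_nonneg t]

theorem integrable_exp_neg_mul_cosh_add_mul (hx : 0 < x) :
    Integrable fun t ↦ rexp (-x * cosh t + ν * t) := by
  have hgauss : Integrable fun t : ℝ ↦ rexp (-(x / 4) * t ^ 2 + ν * t) := by
    have h := (integrable_cexp_quadratic (b := (x / 4 : ℝ)) (by simpa using hx) ν 0).norm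
    norm_cast at h
    simpa only [Complex.norm_real, norm_eq_abs, abs_exp, add_zero] using h
  refine hgauss.mono' (by fun_prop) (.of_forall fun t ↦ ?_)
  rw [norm_eq_abs, abs_exp, exp_le_exp]
  have := mul_le_mul_of_nonneg_left (sq_div_four_le_cosh t) hx.le
  linarith

theorem exp_neg_mul_cosh_mul_cosh_eq (x t : ℝ) :
    rexp (-x * cosh t) * cosh (ν * t) =
      (rexp (-x * cosh t + ν * t) + rexp (-x * cosh t + -ν * t)) / 2 := by
  rw [cosh_eq (ν * t), exp_add, exp_add, neg_mul ν]
  ring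

theorem integrable_exp_neg_mul_cosh_mul_cosh (hx : 0 < x) :
    Integrable fun t ↦ rexp (-x * cosh t) * cosh (ν * t) := by
  simp only [exp_neg_mul_cosh_mul_cosh_eq]
  exact ((integrable_exp_neg_mul_cosh_add_mul ν hx).add
    (integrable_exp_neg_mul_cosh_add_mul (-ν) hx)).div_const 2

theorem two_mul_besselK (hx : 0 < x) :
    2 * besselK ν x = ∫ t, rexp (-x * cosh t + ν * t) := by
  have hreflect : ∫ t, rexp (-x * cosh t + -ν * t) = ∫ t, rexp (-x * cosh t + ν * t) := by
    rw [← integral_neg_eq_self]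
    simp only [cosh_neg, neg_mul_neg]
  calc 2 * besselK ν x = ∫ t, rexp (-x * cosh |t|) * cosh (ν * |t|) := by
        rw [besselK, ← integral_comp_abs]
    _ = ∫ t, rexp (-x * cosh t) * cosh (ν * t) := by
        congr! 2 with t
        rw [cosh_abs, ← cosh_abs (ν * |t|), abs_mul, abs_abs, ← abs_mul, cosh_abs]
    _ = ∫ t, rexp (-x * cosh t + ν * t) := by
        simp only [exp_neg_mul_cosh_mul_cosh_eq]
        rw [integral_div, integral_add (integrable_exp_neg_mul_cosh_add_mul ν hx)
          (integrable_exp_neg_mul_cosh_add_mul (-ν) hx), hreflect]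
        ring

theorem besselK_pos (hx : 0 < x) : 0 < besselK ν x := by
  have h : 0 < ∫ t, rexp (-x * cosh t + ν * t) :=
    integral_exp_pos (integrable_exp_neg_mul_cosh_add_mul ν hx)
  linarith [two_mul_besselK ν hx]

variable {ν} in
theorem besselK_le_besselK_of_abs_le {μ : ℝ} (h : |μ| ≤ |ν|) (hx : 0 < x) :
    besselK μ x ≤ besselK ν x := by
  refine integral_mono (integrable_exp_neg_mul_cosh_mul_cosh μ hx).integrableOn
    (integrable_exp_neg_mul_cosh_mul_cosh ν hx).integrableOn fun t ↦ ?_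
  refine mul_le_mul_of_nonneg_left (cosh_le_cosh.2 ?_) (exp_pos _).le
  rw [abs_mul, abs_mul]
  gcongr

theorem cosh_mul_exp_neg_mul_cosh_add_mul (x t : ℝ) :
    cosh t * rexp (-x * cosh t + ν * t) =
      (rexp (-x * cosh t + (ν + 1) * t) + rexp (-x * cosh t + (ν - 1) * t)) / 2 := by
  rw [add_one_mul, sub_one_mul, ← add_assoc, ← add_sub_assoc, sub_eq_add_neg _ t,
    exp_add _ t, exp_add _ (-t), cosh_eq t]
  ring

theorem sinh_mul_exp_neg_mul_cosh_add_mul (x t : ℝ) :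
    sinh t * rexp (-x * cosh t + ν * t) =
      (rexp (-x * cosh t + (ν + 1) * t) - rexp (-x * cosh t + (ν - 1) * t)) / 2 := by
  rw [add_one_mul, sub_one_mul, ← add_assoc, ← add_sub_assoc, sub_eq_add_neg _ t,
    exp_add _ t, exp_add _ (-t), sinh_eq t]
  ring

-- The integral over `ℝ` of the `t`-derivative of `exp (-x cosh t + ν t)` vanishes.
theorem besselK_add_one (hx : 0 < x) :
    besselK (ν + 1) x = besselK (ν - 1) x + 2 * ν / x * besselK ν x := by
  have hint (μ : ℝ) := integrable_exp_neg_mul_cosh_add_mul μ hx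
  have hdiff : Integrable fun t ↦ x / 2 * (rexp (-x * cosh t + (ν + 1) * t) -
      rexp (-x * cosh t + (ν - 1) * t)) := ((hint (ν + 1)).sub (hint (ν - 1))).const_mul (x / 2)
  have hderiv (t : ℝ) : HasDerivAt (fun t ↦ rexp (-x * cosh t + ν * t))
      (ν * rexp (-x * cosh t + ν * t) -
        x / 2 * (rexp (-x * cosh t + (ν + 1) * t) - rexp (-x * cosh t + (ν - 1) * t))) t := by
    refine (((hasDerivAt_cosh t).const_mul (-x)).add
      ((hasDerivAt_id t).const_mul ν)).exp.congr_deriv ?_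
    simp only [id_eq, Pi.add_apply]
    linear_combination -x * sinh_mul_exp_neg_mul_cosh_add_mul ν x t
  have h := integral_eq_zero_of_hasDerivAt_of_integrable hderiv
    (((hint ν).const_mul ν).sub hdiff) (hint ν)
  rw [integral_sub ((hint ν).const_mul ν) hdiff, integral_const_mul, integral_const_mul,
    integral_sub (hint _) (hint _)] at h
  simp only [← two_mul_besselK _ hx] at h
  field_simp
  linear_combination -h

theorem hasDerivAt_besselK (hx : 0 < x) :
    HasDerivAt (besselK ν) (-besselK (ν + 1) x + ν / x * besselK ν x) x := by
  have hint (μ : ℝ) {z : ℝ} (hz : 0 < z) := integrable_exp_neg_mul_cosh_add_mul μ hz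
  have hcosh {z : ℝ} (hz : 0 < z) :
      Integrable fun t ↦ cosh t * rexp (-z * cosh t + ν * t) := by
    simp only [cosh_mul_exp_neg_mul_cosh_add_mul]
    exact ((hint (ν + 1) hz).add (hint (ν - 1) hz)).div_const 2
  obtain ⟨-, hderiv⟩ := hasDerivAt_integral_of_dominated_loc_of_deriv_le
    (F := fun z t ↦ rexp (-z * cosh t + ν * t))
    (F' := fun z t ↦ -(cosh t * rexp (-z * cosh t + ν * t)))
    (Ioi_mem_nhds (half_lt_self hx)) (.of_forall fun z ↦ by fun_prop) (hint ν hx)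
    (hcosh hx).neg.aestronglyMeasurable
    (.of_forall fun t z (hz : x / 2 < z) ↦ by
      rw [norm_neg, norm_mul, norm_eq_abs, abs_of_pos (cosh_pos t), norm_eq_abs, abs_exp]
      have := cosh_pos t
      gcongr)
    (hcosh (half_pos hx))
    (.of_forall fun t z _ ↦ by
      refine (((hasDerivAt_id z).neg.mul_const _).add_const _).exp.congr_deriv ?_
      simp only [id_eq, Pi.neg_apply]
      ring)
  have hK : HasDerivAt (besselK ν) ((∫ t, -(cosh t * rexp (-x * cosh t + ν * t))) / 2) x :=
    (hderiv.div_const 2).congr_of_eventuallyEq <| eventually_of_mem (Ioi_mem_nhds hx)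
      fun z hz ↦ eq_div_of_mul_eq two_ne_zero <| by rw [mul_comm, two_mul_besselK ν hz]
  refine hK.congr_deriv ?_
  simp only [cosh_mul_exp_neg_mul_cosh_add_mul]
  rw [integral_neg, integral_div, integral_add (hint _ hx) (hint _ hx), ← two_mul_besselK _ hx,
    ← two_mul_besselK _ hx]
  linear_combination (1 / 2) * besselK_add_one ν hx

-- Substitute `t = s - log (x / 2)` in the integral over the line.
theorem rpow_mul_two_mul_besselK (hx : 0 < x) :
    (x / 2) ^ ν * (2 * besselK ν x) =
      ∫ s, rexp (-rexp s - (x / 2) ^ 2 * rexp (-s) + ν * s) := by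
  have hx2 : 0 < x / 2 := by positivity
  rw [two_mul_besselK ν hx, ← integral_sub_right_eq_self _ (log (x / 2)), ← integral_const_mul]
  congr! 2
  rw [rpow_def_of_pos hx2, ← exp_add, cosh_eq, neg_sub, exp_sub, exp_sub, exp_log hx2, exp_neg]
  congr 1
  field_simp
  ring

variable {ν} in
theorem tendsto_rpow_mul_besselK (hν : 0 < ν) :
    Tendsto (fun x ↦ (x / 2) ^ ν * besselK ν x) (𝓝[>] 0) (𝓝 (Gamma ν / 2)) := by
  have hlim : Tendsto (fun x ↦ ∫ s, rexp (-rexp s - (x / 2) ^ 2 * rexp (-s) + ν * s)) (𝓝[>] 0)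
      (𝓝 (Gamma ν)) := by
    rw [← integral_exp_neg_exp_add_mul hν]
    refine tendsto_integral_filter_of_dominated_convergence _ (.of_forall fun x ↦ by fun_prop)
      (.of_forall fun x ↦ .of_forall fun s ↦ ?_) (integrable_exp_neg_exp_add_mul hν)
      (.of_forall fun s ↦ ?_)
    · rw [norm_eq_abs, abs_exp]
      gcongr
      exact sub_le_self _ (by positivity)
    · have hcont : Continuous fun x : ℝ ↦ rexp (-rexp s - (x / 2) ^ 2 * rexp (-s) + ν * s) := by
        fun_prop
      simpa using (hcont.tendsto 0).mono_left (nhdsWithin_le_nhds (s := Ioi 0))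
  refine (hlim.div_const 2).congr' (eventually_mem_nhdsWithin.mono fun x hx ↦ ?_)
  simp only [← rpow_mul_two_mul_besselK ν hx]
  ring

end BesselK

section Wronskian

/-- The Wronskian `I_ν' K_ν - I_ν K_ν'` of the two solutions `K_ν`, `I_ν` of the modified Bessel
equation, multiplied by `x` and with the derivatives expressed through the order `ν + 1`. -/
noncomputable def besselWronskian (ν x : ℝ) : ℝ :=
  x * (besselI ν x * besselK (ν + 1) x + besselI (ν + 1) x * besselK ν x)

variable (ν : ℝ) {x : ℝ}

theorem besselWronskian_add_one (hx : 0 < x) :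
    besselWronskian (ν + 1) x = besselWronskian ν x := by
  simp only [besselWronskian, besselI_add_one (ν + 1) hx, besselK_add_one (ν + 1) hx,
    add_sub_cancel_right]
  ring

theorem hasDerivAt_besselWronskian (hx : 0 < x) : HasDerivAt (besselWronskian ν) 0 x := by
  refine ((hasDerivAt_id x).mul
    (((hasDerivAt_besselI ν hx).mul (hasDerivAt_besselK (ν + 1) hx)).add
      ((hasDerivAt_besselI (ν + 1) hx).mul (hasDerivAt_besselK ν hx)))).congr_deriv ?_
  simp only [id_eq, Pi.add_apply, Pi.mul_apply, besselI_add_one (ν + 1) hx,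
    besselK_add_one (ν + 1) hx, add_sub_cancel_right]
  field_simp
  ring

variable {ν} in
theorem tendsto_besselWronskian (hν : 0 < ν) :
    Tendsto (besselWronskian ν) (𝓝[>] 0) (𝓝 1) := by
  have hΓ : Gamma (ν + 1) ≠ 0 := (Gamma_pos_of_pos (by linarith)).ne'
  have hsq : Tendsto (fun x : ℝ ↦ 2 * (x / 2) ^ 2) (𝓝[>] 0) (𝓝 0) := by
    have hcont : Continuous fun x : ℝ ↦ 2 * (x / 2) ^ 2 := by fun_prop
    simpa using (hcont.tendsto 0).mono_left (nhdsWithin_le_nhds (s := Ioi 0))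
  have hIK := ((tendsto_rpow_neg_mul_besselI ν).mul
    (tendsto_rpow_mul_besselK (show 0 < ν + 1 by linarith))).const_mul 2
  have hKI := hsq.mul ((tendsto_rpow_neg_mul_besselI (ν + 1)).mul (tendsto_rpow_mul_besselK hν))
  have hlim := hIK.add hKI
  rw [zero_mul, add_zero, inv_mul_eq_div, div_right_comm, div_self hΓ,
    mul_one_div_cancel two_ne_zero] at hlim
  refine hlim.congr' (eventually_mem_nhdsWithin.mono fun x (hx : 0 < x) ↦ ?_)
  have hx2 : 0 < x / 2 := by positivity
  simp only [besselWronskian]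
  rw [rpow_neg hx2.le, rpow_neg hx2.le, rpow_add_one hx2.ne']
  field_simp

theorem besselWronskian_eq_one (hx : 0 < x) : besselWronskian ν x = 1 := by
  have hperiodic : Function.Periodic (fun ν ↦ besselWronskian ν x) 1 :=
    fun ν ↦ besselWronskian_add_one ν hx
  obtain ⟨μ, ⟨hμ, -⟩, hνμ⟩ := hperiodic.exists_mem_Ioc one_pos ν 0
  have hconst : ∀ z ∈ Ioi (0 : ℝ), besselWronskian μ x = besselWronskian μ z := fun z hz ↦
    isOpen_Ioi.is_const_of_deriv_eq_zero isPreconnected_Ioi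
      (fun w hw ↦ (hasDerivAt_besselWronskian μ hw).differentiableAt.differentiableWithinAt)
      (fun w hw ↦ (hasDerivAt_besselWronskian μ hw).deriv) hx hz
  have hlim : Tendsto (besselWronskian μ) (𝓝[>] 0) (𝓝 (besselWronskian μ x)) :=
    tendsto_const_nhds.congr' (eventually_mem_nhdsWithin.mono hconst)
  rw [hνμ]
  exact tendsto_nhds_unique hlim (tendsto_besselWronskian hμ)

end Wronskian

section Inequalities

variable {ν x : ℝ}

theorem mul_besselK_add_one_mul_besselI_lt_one (hν : -2 < ν) (hx : 0 < x) :
    x * besselK (ν + 1) x * besselI ν x < 1 := by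
  have hpos : 0 < x * (besselI (ν + 1) x * besselK ν x) :=
    mul_pos hx (mul_pos (besselI_pos (by linarith) hx) (besselK_pos ν hx))
  have hwronskian := besselWronskian_eq_one ν hx
  rw [besselWronskian] at hwronskian
  linarith

theorem mul_besselK_mul_besselI_lt_one (hν : -(1 / 2) ≤ ν) (hx : 0 < x) :
    x * besselK ν x * besselI ν x < 1 := by
  have habs : |ν| ≤ |ν + 1| := sq_le_sq.1 (by linarith)
  refine lt_of_le_of_lt ?_ (mul_besselK_add_one_mul_besselI_lt_one (show -2 < ν by linarith) hx)
  have hI := (besselI_pos (by linarith : -1 < ν) hx).le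
  have hK := besselK_le_besselK_of_abs_le habs hx
  gcongr

theorem stmt_9_general (hν : -2 < ν) (hx : 0 < x) :
    x * besselK (ν + 2) x * besselI ν x < 1 + max (2 * ν + 2) 0 / x := by
  have hrec := besselI_add_one (ν + 1) hx
  have hle := mul_besselK_add_one_mul_besselI_lt_one (show -2 < ν + 1 by linarith) hx
  rw [add_assoc, one_add_one_eq_two] at hle hrec
  rw [add_sub_cancel_right] at hrec
  have hsame : x * besselK (ν + 2) x * besselI (ν + 2) x < 1 :=
    mul_besselK_mul_besselI_lt_one (by linarith) hx
  have hpos : 0 < x * besselK (ν + 2) x * besselI (ν + 1) x :=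
    mul_pos (mul_pos hx (besselK_pos _ hx)) (besselI_pos (by linarith) hx)
  calc x * besselK (ν + 2) x * besselI ν x
      = x * besselK (ν + 2) x * besselI (ν + 2) x +
          (2 * ν + 2) / x * (x * besselK (ν + 2) x * besselI (ν + 1) x) := by
        rw [hrec]
        ring
    _ ≤ x * besselK (ν + 2) x * besselI (ν + 2) x +
          max (2 * ν + 2) 0 / x * (x * besselK (ν + 2) x * besselI (ν + 1) x) := by
        gcongr
        exact le_max_left _ _
    _ < 1 + max (2 * ν + 2) 0 / x :=
        add_lt_add_of_lt_of_le hsame (mul_le_of_le_one_right (by positivity) hle.le)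

end Inequalities

theorem stmt_9 (ν : ℝ) (hν : -(1/2) ≤ ν) (x : ℝ) (hx : 0 < x) :
    x * besselK (ν + 2) x * besselI ν x < 1 + (2 * ν + 3) / x :=
  (stmt_9_general (by linarith) hx).trans <| by
    gcongr
    exact max_lt (by linarith) (by linarith)
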